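/- Let q : ℤ × ℤ → (ℝ → ℝ), differentiable in x, satisfy the semidiscrete Toda lattice b_n(j) − b_{n+1}(j) = h_n(j) − h_n(j−1), where b_n(j) := q_{n,x}(j) and h_n(j) := exp(q_{n+1}(j+1) − q_n(j)). Let B¹, B², B³ : ℤ × ℤ → (ℝ → ℝ) be differentiable in x and satisfy, for all n, j: ∂_x b_n(j) = B¹_n(j) − B¹_n(j−1); B¹_n(j) − B¹_{n+1}(j) = ∂_x h_n(j); ∂_x B¹_n(j) = B¹_n(j)( b_{n+1}(j+1) − b_n(j) ) + h_n(j)( B¹_n(j−1) − B¹_n(j) ) + B²_n(j) − B²_n(j−1); B²_n(j) − B²_{n+1}(j) = h_n(j) B¹_{n+1}(j+1) − h_{n+1}(j+1) B¹_{n+1}(j); ∂_x B²_n(j) = B²_n(j)( b_{n+2}(j+2) − b_n(j) ) + h_{n+1}(j+1)( B²_n(j−1) − B²_n(j) ) + B³_n(j) − B³_n(j−1); and B³_n(j) − B³_{n+1}(j) = h_n(j) B²_{n+1}(j+1) − h_{n+2}(j+2) B²_{n+1}(j). Define F_n(j) := b_n(j)³ + B²_n(j) + B²_n(j−1) + B²_n(j−2)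 + B¹_n(j)(2 b_n(j) + b_n(j+1)) + B¹_n(j−1)(2 b_n(j) + b_n(j−1)) − B¹_n(j) h_n(j+1) − B¹_n(j−1) h_n(j) − B¹_n(j−2) h_n(j−1). Then for all n, j: ∂_x F_n(j) − ∂_x F_{n+1}(j) = h_n(j)( F_{n+1}(j+1) − F_n(j) ) − h_n(j−1)( F_{n+1}(j) − F_n(j−1) ). (This expresses that the third-order flow defines a symmetry of the semidiscrete Toda lattice.) -/

import Mathlib

/-!
The fields at level `n` encode a lower Hessenberg matrix `Lₙ`, indexed by `ℤ × ℤ` and with ones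
above the diagonal: `bₙ` is its main diagonal and `bₙ⁽¹⁾` the first diagonal below it. The second
and third ones are determined by `b⁽²⁾` and `b⁽³⁾`, which are entries of `Mₙ Lₙ` and `Mₙ₊₁ Mₙ Lₙ`,
where `Mₙ` is the unipotent lower bidiagonal matrix with subdiagonal `hₙ`. In these coordinates the
`x`-evolution is the Lax equation `∂ₓ Lₙ = [(Lₙ)₊, Lₙ]`, where `₊` denotes the upper triangular
part including the diagonal, and passing from `n` to `n + 1` is the Darboux transformation
`Mₙ Lₙ = Lₙ₊₁ Mₙ`. Both relations are inherited by `Lₙ³`, whose diagonal is the third-order flow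
`Fₙ`. Let `Gₙ` be its first subdiagonal. The Lax equation gives `∂ₓ Fₙ(j) = Gₙ(j) - Gₙ(j - 1)`, the
Darboux transformation gives `Gₙ(j) - Gₙ₊₁(j) = hₙ(j) (Fₙ₊₁(j + 1) - Fₙ(j))`, and together they
are the symmetry condition.
-/

namespace SemidiscreteToda

/-- The leading diagonals of a lower Hessenberg matrix `L` over `ℤ × ℤ` with `L(j, j + 1) = 1`,
listed by columns: `aₖ j = L(j + k, j)`. Entries further from the diagonal do not enter the
diagonal and first subdiagonal of `L³` and are left unspecified. -/
structure LaxDiagonals (R : Type*) where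
  a₀ : ℤ → R
  a₁ : ℤ → R
  a₂ : ℤ → R
  a₃ : ℤ → R

namespace LaxDiagonals

section Algebra

variable {R : Type*} [CommRing R]

/-- The diagonal entry `L³(j, j)`, as a sum over the closed walks of three steps from `j`. -/
def cubeDiag (L : LaxDiagonals R) (j : ℤ) : R :=
  L.a₀ j ^ 3 + L.a₁ j * (2 * L.a₀ j + L.a₀ (j + 1)) + L.a₁ (j - 1) * (2 * L.a₀ j + L.a₀ (j - 1))
    + L.a₂ j + L.a₂ (j - 1) + L.a₂ (j - 2)

/-- The subdiagonal entry `L³(j + 1, j)`, as a sum over the walks of three steps from `j + 1`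
to `j`. -/
def cubeSubdiag (L : LaxDiagonals R) (j : ℤ) : R :=
  L.a₁ j * (L.a₀ j ^ 2 + L.a₀ j * L.a₀ (j + 1) + L.a₀ (j + 1) ^ 2)
    + L.a₁ j * (L.a₁ (j - 1) + L.a₁ j + L.a₁ (j + 1))
    + L.a₂ j * (L.a₀ j + L.a₀ (j + 1) + L.a₀ (j + 2))
    + L.a₂ (j - 1) * (L.a₀ (j - 1) + L.a₀ j + L.a₀ (j + 1))
    + L.a₃ j + L.a₃ (j - 1) + L.a₃ (j - 2)

/-- The Darboux transformation `M L = L' M`, where `M` is the unipotent lower bidiagonal matrix with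
`M(j + 1, j) = h j`, read off on the diagonals recorded by `LaxDiagonals`. -/
structure IsDarboux (h : ℤ → R) (L L' : LaxDiagonals R) : Prop where
  a₀ : ∀ j, L.a₀ j + h (j - 1) = L'.a₀ j + h j
  a₁ : ∀ j, L.a₁ j + h j * L.a₀ j = L'.a₁ j + L'.a₀ (j + 1) * h j
  a₂ : ∀ j, L.a₂ j + h (j + 1) * L.a₁ j = L'.a₂ j + L'.a₁ (j + 1) * h j
  a₃ : ∀ j, L.a₃ j + h (j + 2) * L.a₂ j = L'.a₃ j + L'.a₂ (j + 1) * h j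

theorem IsDarboux.cubeSubdiag_sub {h : ℤ → R} {L L' : LaxDiagonals R} (H : IsDarboux h L L')
    (j : ℤ) :
    L.cubeSubdiag j - L'.cubeSubdiag j = h j * (L'.cubeDiag (j + 1) - L.cubeDiag j) := by
  have a₀ i : L.a₀ i = L'.a₀ i + h i - h (i - 1) := eq_sub_of_add_eq (H.a₀ i)
  have a₁ i : L.a₁ i = L'.a₁ i + L'.a₀ (i + 1) * h i - h i * L.a₀ i := eq_sub_of_add_eq (H.a₁ i)
  have a₂ i : L.a₂ i = L'.a₂ i + L'.a₁ (i + 1) * h i - h (i + 1) * L.a₁ i :=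
    eq_sub_of_add_eq (H.a₂ i)
  have a₃ i : L.a₃ i = L'.a₃ i + L'.a₂ (i + 1) * h i - h (i + 2) * L.a₂ i :=
    eq_sub_of_add_eq (H.a₃ i)
  simp only [cubeSubdiag, cubeDiag, a₃, a₂, a₁, a₀]
  ring_nf

end Algebra

section Flow

variable {𝕜 𝔸 : Type*} [NontriviallyNormedField 𝕜] [NormedCommRing 𝔸] [NormedAlgebra 𝕜 𝔸]
  {L L' : 𝕜 → LaxDiagonals 𝔸} {x : 𝕜}

/-- The Lax equation `∂ₓ L = [L₊, L]` at the point `x`, where `L₊` is the upper triangular part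
of `L` including its diagonal, read off on the first three diagonals. -/
structure IsLaxFlowAt (L : 𝕜 → LaxDiagonals 𝔸) (x : 𝕜) : Prop where
  a₀ : ∀ j, HasDerivAt (fun y ↦ (L y).a₀ j) ((L x).a₁ j - (L x).a₁ (j - 1)) x
  a₁ : ∀ j, HasDerivAt (fun y ↦ (L y).a₁ j)
    ((L x).a₁ j * ((L x).a₀ (j + 1) - (L x).a₀ j) + (L x).a₂ j - (L x).a₂ (j - 1)) x
  a₂ : ∀ j, HasDerivAt (fun y ↦ (L y).a₂ j)
    ((L x).a₂ j * ((L x).a₀ (j + 2) - (L x).a₀ j) + (L x).a₃ j - (L x).a₃ (j - 1)) x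

theorem IsLaxFlowAt.hasDerivAt_cubeDiag (H : IsLaxFlowAt L x) (j : ℤ) :
    HasDerivAt (fun y ↦ (L y).cubeDiag j) ((L x).cubeSubdiag j - (L x).cubeSubdiag (j - 1)) x := by
  have leibniz := ((((((H.a₀ j).pow 3).add
    ((H.a₁ j).mul (((H.a₀ j).const_mul 2).add (H.a₀ (j + 1))))).add
    ((H.a₁ (j - 1)).mul (((H.a₀ j).const_mul 2).add (H.a₀ (j - 1))))).add
    (H.a₂ j)).add (H.a₂ (j - 1))).add (H.a₂ (j - 2))
  refine leibniz.congr_deriv ?_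
  simp only [cubeSubdiag, Pi.add_apply]
  push_cast
  ring_nf

theorem deriv_cubeDiag_sub_deriv_cubeDiag {h : ℤ → 𝔸} (hL : IsLaxFlowAt L x)
    (hL' : IsLaxFlowAt L' x) (hM : IsDarboux h (L x) (L' x)) (j : ℤ) :
    deriv (fun y ↦ (L y).cubeDiag j) x - deriv (fun y ↦ (L' y).cubeDiag j) x
      = h j * ((L' x).cubeDiag (j + 1) - (L x).cubeDiag j)
        - h (j - 1) * ((L' x).cubeDiag j - (L x).cubeDiag (j - 1)) := by
  have flux_sub := hM.cubeSubdiag_sub j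
  have flux_sub_left := hM.cubeSubdiag_sub (j - 1)
  rw [sub_add_cancel] at flux_sub_left
  rw [(hL.hasDerivAt_cubeDiag j).deriv, (hL'.hasDerivAt_cubeDiag j).deriv]
  linear_combination flux_sub - flux_sub_left

end Flow

end LaxDiagonals

section Coordinates

variable {X R : Type*} [CommRing R]

/-- The right-hand side `Fₙ(j)` of the third-order flow `q_{n,t}(j) = Fₙ(j)`. -/
def thirdOrderFlow (h b B1 B2 : ℤ → ℤ → X → R) (n j : ℤ) (x : X) : R :=
  b n j x ^ 3 + B2 n j x + B2 n (j - 1) x + B2 n (j - 2) x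
    + B1 n j x * (2 * b n j x + b n (j + 1) x)
    + B1 n (j - 1) x * (2 * b n j x + b n (j - 1) x)
    - B1 n j x * h n (j + 1) x
    - B1 n (j - 1) x * h n j x
    - B1 n (j - 2) x * h n (j - 1) x

/-- The Lax matrix `Lₙ` of level `n`. Its lower two diagonals solve
`B2ₙ(j) = (Mₙ Lₙ)(j + 2, j)` and `B3ₙ(j) = (Mₙ₊₁ Mₙ Lₙ)(j + 3, j)`. -/
def laxDiagonals (h b B1 B2 B3 : ℤ → ℤ → X → R) (n : ℤ) (x : X) : LaxDiagonals R where
  a₀ j := b n j x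
  a₁ j := B1 n j x
  a₂ j := B2 n j x - h n (j + 1) x * B1 n j x
  a₃ j := B3 n j x - h (n + 1) (j + 2) x * B2 n j x
    - h n (j + 2) x * (B2 n j x - h n (j + 1) x * B1 n j x)

theorem cubeDiag_laxDiagonals (h b B1 B2 B3 : ℤ → ℤ → X → R) (n j : ℤ) (x : X) :
    (laxDiagonals h b B1 B2 B3 n x).cubeDiag j = thirdOrderFlow h b B1 B2 n j x := by
  simp only [LaxDiagonals.cubeDiag, laxDiagonals, thirdOrderFlow]
  ring_nf

end Coordinates

section Lattice

variable {𝕜 𝔸 : Type*} [NontriviallyNormedField 𝕜] [NormedCommRing 𝔸] [NormedAlgebra 𝕜 𝔸]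
  {h b B1 B2 B3 : ℤ → ℤ → 𝕜 → 𝔸} {x : 𝕜}

/-- The semidiscrete Toda lattice together with its nonlocal variables `B1`, `B2`, `B3`, at the
point `x`. The field `q` is eliminated: `h` enters only through its logarithmic derivative, in
`hasDerivAt_h`. -/
structure IsExtendedTodaAt (h b B1 B2 B3 : ℤ → ℤ → 𝕜 → 𝔸) (x : 𝕜) : Prop where
  hasDerivAt_h : ∀ n j, HasDerivAt (h n j) (h n j x * (b (n + 1) (j + 1) x - b n j x)) x
  hasDerivAt_b : ∀ n j, HasDerivAt (b n j) (B1 n j x - B1 n (j - 1) x) x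
  hasDerivAt_B1 : ∀ n j, HasDerivAt (B1 n j)
    (B1 n j x * (b (n + 1) (j + 1) x - b n j x) + h n j x * (B1 n (j - 1) x - B1 n j x)
      + B2 n j x - B2 n (j - 1) x) x
  hasDerivAt_B2 : ∀ n j, HasDerivAt (B2 n j)
    (B2 n j x * (b (n + 2) (j + 2) x - b n j x)
      + h (n + 1) (j + 1) x * (B2 n (j - 1) x - B2 n j x) + B3 n j x - B3 n (j - 1) x) x
  b_sub : ∀ n j, b n j x - b (n + 1) j x = h n j x - h n (j - 1) x
  B1_sub : ∀ n j, B1 n j x - B1 (n + 1) j x = h n j x * (b (n + 1) (j + 1) x - b n j x)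
  B2_sub : ∀ n j, B2 n j x - B2 (n + 1) j x
    = h n j x * B1 (n + 1) (j + 1) x - h (n + 1) (j + 1) x * B1 (n + 1) j x
  B3_sub : ∀ n j, B3 n j x - B3 (n + 1) j x
    = h n j x * B2 (n + 1) (j + 1) x - h (n + 2) (j + 2) x * B2 (n + 1) j x

namespace IsExtendedTodaAt

theorem isDarboux (H : IsExtendedTodaAt h b B1 B2 B3 x) (n : ℤ) :
    LaxDiagonals.IsDarboux (fun j ↦ h n j x) (laxDiagonals h b B1 B2 B3 n x)
      (laxDiagonals h b B1 B2 B3 (n + 1) x) where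
  a₀ j := by
    simp only [laxDiagonals]
    linear_combination H.b_sub n j
  a₁ j := by
    simp only [laxDiagonals]
    linear_combination H.B1_sub n j
  a₂ j := by
    simp only [laxDiagonals]
    linear_combination H.B2_sub n j
  a₃ j := by
    simp only [laxDiagonals, add_assoc, Int.reduceAdd]
    linear_combination H.B3_sub n j - h (n + 1) (j + 2) x * H.B2_sub n j

theorem b_add_one_sub (H : IsExtendedTodaAt h b B1 B2 B3 x) (n j : ℤ) :
    b n (j + 1) x - b (n + 1) (j + 1) x = h n (j + 1) x - h n j x := by
  simpa only [add_sub_cancel_right] using H.b_sub n (j + 1)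

theorem isLaxFlowAt (H : IsExtendedTodaAt h b B1 B2 B3 x) (n : ℤ) :
    LaxDiagonals.IsLaxFlowAt (laxDiagonals h b B1 B2 B3 n) x where
  a₀ := H.hasDerivAt_b n
  a₁ j := by
    refine (H.hasDerivAt_B1 n j).congr_deriv ?_
    simp only [laxDiagonals, sub_add_cancel]
    linear_combination -B1 n j x * H.b_add_one_sub n j
  a₂ j := by
    have b_step := H.b_add_one_sub n j
    have b_step_right := H.b_add_one_sub n (j + 1)
    have b_step_right_succ := H.b_add_one_sub (n + 1) (j + 1)
    refine ((H.hasDerivAt_B2 n j).sub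
      ((H.hasDerivAt_h n (j + 1)).mul (H.hasDerivAt_B1 n j))).congr_deriv ?_
    simp only [add_assoc, Int.reduceAdd] at b_step_right b_step_right_succ
    simp only [laxDiagonals, sub_add_cancel, add_assoc, Int.reduceAdd,
      show j - 1 + 2 = j + 1 by ring]
    linear_combination h n (j + 1) x * B1 n j x * (b_step + b_step_right)
      - B2 n j x * (b_step_right + b_step_right_succ)

end IsExtendedTodaAt

end Lattice

end SemidiscreteToda

open SemidiscreteToda

theorem semidiscrete_toda_third_order_symmetry_general
    {𝕜 𝔸 : Type*} [NontriviallyNormedField 𝕜] [NormedCommRing 𝔸] [NormedAlgebra 𝕜 𝔸]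
    {h b B1 B2 B3 : ℤ → ℤ → 𝕜 → 𝔸} {x : 𝕜}
    (H : IsExtendedTodaAt h b B1 B2 B3 x) (n j : ℤ) :
    deriv (thirdOrderFlow h b B1 B2 n j) x - deriv (thirdOrderFlow h b B1 B2 (n + 1) j) x
      = h n j x * (thirdOrderFlow h b B1 B2 (n + 1) (j + 1) x - thirdOrderFlow h b B1 B2 n j x)
        - h n (j - 1) x
          * (thirdOrderFlow h b B1 B2 (n + 1) j x - thirdOrderFlow h b B1 B2 n (j - 1) x) := by
  simpa only [cubeDiag_laxDiagonals] using LaxDiagonals.deriv_cubeDiag_sub_deriv_cubeDiag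
    (H.isLaxFlowAt n) (H.isLaxFlowAt (n + 1)) (H.isDarboux n) j

/-- the third-order flow
`q_{n,t}(j) = bₙ(j)³ + bₙ⁽²⁾(j) + bₙ⁽²⁾(j−1) + bₙ⁽²⁾(j−2) + bₙ⁽¹⁾(j)(2bₙ(j)+bₙ(j+1)) + bₙ⁽¹⁾(j−1)(2bₙ(j)+bₙ(j−1)) − bₙ⁽¹⁾(j)hₙ(j+1) − bₙ⁽¹⁾(j−1)hₙ(j) − bₙ⁽¹⁾(j−2)hₙ(j−1)`
defines a symmetry of the semidiscrete Toda lattice. Here `B1, B2, B3` play the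
roles of the nonlocal variables `b⁽¹⁾, b⁽²⁾, b⁽³⁾`. -/
theorem semidiscrete_toda_third_order_symmetry
    (q h b : ℤ → ℤ → ℝ → ℝ)
    (hq : ∀ n j, Differentiable ℝ (q n j))
    (hh : ∀ n j x, h n j x = Real.exp (q (n + 1) (j + 1) x - q n j x))
    (hb : ∀ n j x, b n j x = deriv (q n j) x)
    (toda : ∀ (n j : ℤ) (x : ℝ),
        b n j x - b (n + 1) j x = h n j x - h n (j - 1) x)
    (B1 B2 B3 : ℤ → ℤ → ℝ → ℝ)
    (hB1 : ∀ n j, Differentiable ℝ (B1 n j))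
    (hB2 : ∀ n j, Differentiable ℝ (B2 n j))
    (hB3 : ∀ n j, Differentiable ℝ (B3 n j))
    (e1 : ∀ (n j : ℤ) (x : ℝ), HasDerivAt (b n j) (B1 n j x - B1 n (j - 1) x) x)
    (e2 : ∀ (n j : ℤ) (x : ℝ), B1 n j x - B1 (n + 1) j x = deriv (h n j) x)
    (e3 : ∀ (n j : ℤ) (x : ℝ),
        deriv (B1 n j) x
          = B1 n j x * (b (n + 1) (j + 1) x - b n j x)
            + h n j x * (B1 n (j - 1) x - B1 n j x)
            + B2 n j x - B2 n (j - 1) x)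
    (e4 : ∀ (n j : ℤ) (x : ℝ),
        B2 n j x - B2 (n + 1) j x
          = h n j x * B1 (n + 1) (j + 1) x - h (n + 1) (j + 1) x * B1 (n + 1) j x)
    (e5 : ∀ (n j : ℤ) (x : ℝ),
        deriv (B2 n j) x
          = B2 n j x * (b (n + 2) (j + 2) x - b n j x)
            + h (n + 1) (j + 1) x * (B2 n (j - 1) x - B2 n j x)
            + B3 n j x - B3 n (j - 1) x)
    (e6 : ∀ (n j : ℤ) (x : ℝ),
        B3 n j x - B3 (n + 1) j x
          = h n j x * B2 (n + 1) (j + 1) x - h (n + 2) (j + 2) x * B2 (n + 1) j x)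
    (F : ℤ → ℤ → ℝ → ℝ)
    (hF : ∀ n j x,
        F n j x = (b n j x) ^ 3 + B2 n j x + B2 n (j - 1) x + B2 n (j - 2) x
          + B1 n j x * (2 * b n j x + b n (j + 1) x)
          + B1 n (j - 1) x * (2 * b n j x + b n (j - 1) x)
          - B1 n j x * h n (j + 1) x
          - B1 n (j - 1) x * h n j x
          - B1 n (j - 2) x * h n (j - 1) x) :
    ∀ (n j : ℤ) (x : ℝ),
      deriv (F n j) x - deriv (F (n + 1) j) x
        = h n j x * (F (n + 1) (j + 1) x - F n j x)
          - h n (j - 1) x * (F (n + 1) j x - F n (j - 1) x) := by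
  intro n j x
  obtain rfl : F = thirdOrderFlow h b B1 B2 := by funext n j x; exact hF n j x
  obtain rfl : h = fun n j x ↦ Real.exp (q (n + 1) (j + 1) x - q n j x) := by
    funext n j x; exact hh n j x
  obtain rfl : b = fun n j ↦ deriv (q n j) := by funext n j x; exact hb n j x
  have deriv_h (n j : ℤ) : HasDerivAt (fun x ↦ Real.exp (q (n + 1) (j + 1) x - q n j x)) _ x :=
    ((hq (n + 1) (j + 1) x).hasDerivAt.sub (hq n j x).hasDerivAt).exp
  exact semidiscrete_toda_third_order_symmetry_general (B3 := B3)
    { hasDerivAt_h := deriv_h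
      hasDerivAt_b := fun n j ↦ e1 n j x
      hasDerivAt_B1 := fun n j ↦ e3 n j x ▸ (hB1 n j x).hasDerivAt
      hasDerivAt_B2 := fun n j ↦ e5 n j x ▸ (hB2 n j x).hasDerivAt
      b_sub := fun n j ↦ toda n j x
      B1_sub := fun n j ↦ (e2 n j x).trans (deriv_h n j).deriv
      B2_sub := fun n j ↦ e4 n j x
      B3_sub := fun n j ↦ e6 n j x } n j
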